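/- arXiv:2307.02964 — 3 statements merged into one kernel-verified Lean document; each statement's English description precedes it below -/
import Mathlib

section
/- There exists a constant C ≥ 1, depending only on m, such that for every m×m complex matrix M one has C⁻¹·(‖[M,M*]‖ + Σ_{k=1}^{m} |b_k(M)|^{2/k}) ≤ ‖M‖² ≤ C·(‖[M,M*]‖ + Σ_{k=1}^{m} |b_k(M)|^{2/k}). -/
open Matrix

/-- The Frobenius norm of a complex square matrix. -/
noncomputable def frobNorm {m : ℕ} (A : Matrix (Fin m) (Fin m) ℂ) : ℝ :=
  Real.sqrt (∑ i, ∑ j, ‖A i j‖ ^ 2)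

/-!
Put `R(M) = ‖[M,M*]‖ + ∑ |b_k(M)|^{2/k}`. Since `b_k` is a homogeneous polynomial of degree `k` in
the entries of `M`, the continuous functions `R` and `‖·‖²` scale in the same way under dilations,
so compactness of the unit sphere makes them comparable as soon as `R` vanishes only at `0`. If
`R(M) = 0`, then `M` is nilpotent by Cayley–Hamilton, and it is normal; a normal nilpotent matrix
is zero.
-/

lemma exists_one_le_bounds_of_isCompact {X : Type*} [TopologicalSpace X] {K : Set X} {f : X → ℝ}
    (hK : IsCompact K) (hcont : ContinuousOn f K) (hpos : ∀ x ∈ K, 0 < f x) :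
    ∃ C : ℝ, 1 ≤ C ∧ ∀ x ∈ K, f x ≤ C ∧ 1 ≤ C * f x := by
  obtain ⟨A, hA⟩ := hK.bddAbove_image hcont
  obtain ⟨B, hB⟩ := hK.bddAbove_image (hcont.inv₀ fun x hx => (hpos x hx).ne')
  refine ⟨max 1 (max A B), le_max_left _ _, fun x hx => ?_⟩
  have hfA : f x ≤ A := hA (Set.mem_image_of_mem f hx)
  have hfB : (f x)⁻¹ ≤ B := hB (Set.mem_image_of_mem _ hx)
  exact ⟨le_max_of_le_right (le_max_of_le_left hfA),
    (inv_le_iff_one_le_mul₀ (hpos x hx)).mp (le_max_of_le_right (le_max_of_le_right hfB))⟩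

theorem exists_norm_pow_equiv_of_homogeneous {E : Type*} [NormedAddCommGroup E] [NormedSpace ℝ E]
    [ProperSpace E] {f : E → ℝ} {d : ℕ} (hd : d ≠ 0) (hcont : ContinuousOn f (Metric.sphere 0 1))
    (hsmul : ∀ t : ℝ, 0 ≤ t → ∀ x, f (t • x) = t ^ d * f x) (hpos : ∀ x ≠ 0, 0 < f x) :
    ∃ C : ℝ, 1 ≤ C ∧ ∀ x, C⁻¹ * f x ≤ ‖x‖ ^ d ∧ ‖x‖ ^ d ≤ C * f x := by
  obtain ⟨C, hC, hsphere⟩ := exists_one_le_bounds_of_isCompact (isCompact_sphere 0 1)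
    hcont fun x hx => hpos x (ne_zero_of_mem_unit_sphere ⟨x, hx⟩)
  refine ⟨C, hC, fun x => ?_⟩
  rcases eq_or_ne x 0 with rfl | hx
  · have hzero : f 0 = 0 := by simpa [hd] using hsmul 0 le_rfl 0
    simp [hzero, hd]
  have hscale : f x = ‖x‖ ^ d * f (‖x‖⁻¹ • x) := by
    rw [← hsmul _ (norm_nonneg x), smul_inv_smul₀ (norm_ne_zero_iff.mpr hx)]
  obtain ⟨hupper, hlower⟩ := hsphere (‖x‖⁻¹ • x) (by simp [norm_smul, hx])
  rw [hscale]
  constructor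
  · rw [inv_mul_le_iff₀ (by linarith), mul_comm C]
    gcongr
  · calc ‖x‖ ^ d ≤ ‖x‖ ^ d * (C * f (‖x‖⁻¹ • x)) := le_mul_of_one_le_right (by positivity) hlower
      _ = C * (‖x‖ ^ d * f (‖x‖⁻¹ • x)) := by ring

section NormalNilpotent

variable {A : Type*} [NormedRing A] [StarRing A] [CStarRing A] {a : A}

lemma eq_zero_of_isSelfAdjoint_of_isNilpotent (ha : IsSelfAdjoint a)
    (hnil : IsNilpotent a) : a = 0 := by
  obtain ⟨k, hk⟩ := hnil
  have hnorm : ‖a‖ ^ 2 ^ k = 0 := by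
    rw [← ha.norm_pow_two_pow, pow_eq_zero_of_le Nat.lt_two_pow_self.le hk, norm_zero]
  exact norm_eq_zero.mp (eq_zero_of_pow_eq_zero hnorm)

lemma eq_zero_of_isStarNormal_of_isNilpotent (ha : IsStarNormal a)
    (hnil : IsNilpotent a) : a = 0 :=
  (CStarRing.star_mul_self_eq_zero_iff a).mp <|
    eq_zero_of_isSelfAdjoint_of_isNilpotent (.star_mul_self a)
      (ha.star_comm_self.isNilpotent_mul_left hnil)

end NormalNilpotent

section CharpolyCoeff

open Polynomial

variable {R n : Type*} [CommRing R] [Fintype n] [DecidableEq n]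

lemma charpolyRev_smul (t : R) (M : Matrix n n R) :
    (t • M).charpolyRev = M.charpolyRev.comp (C t * X) := by
  rw [charpolyRev, charpolyRev, ← coe_compRingHom_apply, RingHom.map_det]
  congr 1
  ext i j : 1
  rcases eq_or_ne i j with rfl | hij
  · simp [X_mul, mul_assoc, mul_left_comm]
  · simp [hij, X_mul, mul_assoc, mul_left_comm]

lemma coeff_charpolyRev (M : Matrix n n R) {k : ℕ} (hk : k ≤ Fintype.card n) :
    M.charpolyRev.coeff k = M.charpoly.coeff (Fintype.card n - k) := by
  nontriviality R
  rw [← M.reverse_charpoly, coeff_reverse, charpoly_natDegree_eq_dim, revAt_le hk]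

lemma charpoly_coeff_smul (t : R) (M : Matrix n n R) {k : ℕ} (hk : k ≤ Fintype.card n) :
    (t • M).charpoly.coeff (Fintype.card n - k) =
      t ^ k * M.charpoly.coeff (Fintype.card n - k) := by
  rw [← coeff_charpolyRev _ hk, ← coeff_charpolyRev _ hk, charpolyRev_smul, comp_C_mul_X_coeff,
    mul_comm]

lemma isNilpotent_of_charpoly_coeff_eq_zero {M : Matrix n n R}
    (h : ∀ i < Fintype.card n, M.charpoly.coeff i = 0) : IsNilpotent M := by
  nontriviality R
  have hcharpoly : M.charpoly = X ^ Fintype.card n := by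
    rw [M.charpoly_monic.as_sum, charpoly_natDegree_eq_dim, add_eq_left]
    exact Finset.sum_eq_zero fun i hi => by rw [h i (Finset.mem_range.mp hi), C_0, zero_mul]
  exact ⟨Fintype.card n, by simpa [hcharpoly] using M.aeval_self_charpoly⟩

lemma continuous_charpoly_coeff [TopologicalSpace R] [IsTopologicalRing R] (i : ℕ) :
    Continuous fun M : Matrix n n R => M.charpoly.coeff i := by
  have heval (M : Matrix n n R) : M.charpoly.coeff i =
      MvPolynomial.eval (fun p : n × n => M p.1 p.2) ((charpoly.univ R n).coeff i) :=
    (charpoly.univ_coeff_eval₂Hom n (RingHom.id R) (fun p => M p.1 p.2) i).symm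
  simp_rw [heval]
  exact (MvPolynomial.continuous_eval _).comp
    (continuous_pi fun p => continuous_id.matrix_elem p.1 p.2)

end CharpolyCoeff

section CharpolyGauge

variable {R n : Type*} [NormedCommRing R] [Fintype n] [DecidableEq n]

/-- The gauge `∑ₖ |bₖ(M)| ^ (2 / k)` of a matrix `M` of size `m`, where `bₖ(M)` is the coefficient
of degree `m - k` of its characteristic polynomial. The exponents make it absolutely homogeneous of
degree `2`. -/
noncomputable def charpolyGauge (M : Matrix n n R) : ℝ :=
  ∑ k ∈ Finset.Icc 1 (Fintype.card n),
    ‖M.charpoly.coeff (Fintype.card n - k)‖ ^ ((2 : ℝ) / (k : ℝ))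

lemma charpolyGauge_nonneg (M : Matrix n n R) : 0 ≤ charpolyGauge M :=
  Finset.sum_nonneg fun _ _ => by positivity

lemma continuous_charpolyGauge : Continuous (charpolyGauge : Matrix n n R → ℝ) :=
  continuous_finsetSum _ fun _ _ =>
    (continuous_charpoly_coeff _).norm.rpow_const fun _ => Or.inr (by positivity)

lemma charpolyGauge_smul [NormMulClass R] [NormOneClass R] (t : R) (M : Matrix n n R) :
    charpolyGauge (t • M) = ‖t‖ ^ 2 * charpolyGauge M := by
  rw [charpolyGauge, charpolyGauge, Finset.mul_sum]
  refine Finset.sum_congr rfl fun k hk => ?_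
  obtain ⟨hk_pos, hk_le⟩ := Finset.mem_Icc.mp hk
  have hk_ne : (k : ℝ) ≠ 0 := by positivity
  have hpow : (‖t‖ ^ k) ^ ((2 : ℝ) / k) = ‖t‖ ^ 2 := by
    rw [← Real.rpow_natCast_mul (norm_nonneg t), mul_div_cancel₀ _ hk_ne, Real.rpow_two]
  rw [charpoly_coeff_smul t M hk_le, norm_mul, norm_pow,
    Real.mul_rpow (by positivity) (norm_nonneg _), hpow]

lemma isNilpotent_of_charpolyGauge_eq_zero {M : Matrix n n R} (h : charpolyGauge M = 0) :
    IsNilpotent M := by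
  refine isNilpotent_of_charpoly_coeff_eq_zero fun i hi => norm_eq_zero.mp ?_
  have hterm := (Finset.sum_eq_zero_iff_of_nonneg fun _ _ => by positivity).mp h
    (Fintype.card n - i) (Finset.mem_Icc.mpr ⟨by lia, by lia⟩)
  rw [Nat.sub_sub_self hi.le] at hterm
  exact ((Real.rpow_eq_zero_iff_of_nonneg (norm_nonneg _)).mp hterm).1

end CharpolyGauge

section FrobeniusNorm

variable {𝕜 n : Type*} [RCLike 𝕜] [Fintype n]

open scoped Matrix.Norms.L2Operator in
lemma matrix_eq_zero_of_isNormal_of_isNilpotent [DecidableEq n] {M : Matrix n n 𝕜}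
    (hnormal : M * Mᴴ = Mᴴ * M) (hnil : IsNilpotent M) : M = 0 :=
  eq_zero_of_isStarNormal_of_isNilpotent ⟨hnormal.symm⟩ hnil

open scoped Matrix.Norms.Frobenius

lemma norm_commutator_conjTranspose_smul (t : 𝕜) (M : Matrix n n 𝕜) :
    ‖(t • M) * (t • M)ᴴ - (t • M)ᴴ * (t • M)‖ = ‖t‖ ^ 2 * ‖M * Mᴴ - Mᴴ * M‖ := by
  have hsmul : (t • M) * (t • M)ᴴ - (t • M)ᴴ * (t • M) = (t * star t) • (M * Mᴴ - Mᴴ * M) := by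
    simp only [conjTranspose_smul, smul_mul_smul_comm, smul_sub, mul_comm]
  rw [hsmul, norm_smul, norm_mul, norm_star, sq]

lemma commutator_add_charpolyGauge_pos [DecidableEq n] {M : Matrix n n 𝕜} (hM : M ≠ 0) :
    0 < ‖M * Mᴴ - Mᴴ * M‖ + charpolyGauge M := by
  refine (add_nonneg (norm_nonneg _) (charpolyGauge_nonneg M)).lt_of_ne' fun h => hM ?_
  obtain ⟨hcomm, hgauge⟩ :=
    (add_eq_zero_iff_of_nonneg (norm_nonneg _) (charpolyGauge_nonneg M)).mp h
  exact matrix_eq_zero_of_isNormal_of_isNilpotent (sub_eq_zero.mp (norm_eq_zero.mp hcomm))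
    (isNilpotent_of_charpolyGauge_eq_zero hgauge)

variable (𝕜 n) in
theorem matrix_norm_equiv_commutator_charpoly_general [DecidableEq n] :
    ∃ C : ℝ, 1 ≤ C ∧ ∀ M : Matrix n n 𝕜,
      C⁻¹ * (‖M * Mᴴ - Mᴴ * M‖ +
          ∑ k ∈ Finset.Icc 1 (Fintype.card n),
            ‖M.charpoly.coeff (Fintype.card n - k)‖ ^ ((2 : ℝ) / (k : ℝ))) ≤
        ‖M‖ ^ 2 ∧
      ‖M‖ ^ 2 ≤
        C * (‖M * Mᴴ - Mᴴ * M‖ +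
          ∑ k ∈ Finset.Icc 1 (Fintype.card n),
            ‖M.charpoly.coeff (Fintype.card n - k)‖ ^ ((2 : ℝ) / (k : ℝ))) := by
  have : ProperSpace (Matrix n n 𝕜) := FiniteDimensional.proper ℝ _
  have hcont : Continuous fun M : Matrix n n 𝕜 => ‖M * Mᴴ - Mᴴ * M‖ + charpolyGauge M :=
    .add (by fun_prop) continuous_charpolyGauge
  have hsmul (t : ℝ) (ht : 0 ≤ t) (M : Matrix n n 𝕜) :
      ‖(t • M) * (t • M)ᴴ - (t • M)ᴴ * (t • M)‖ + charpolyGauge (t • M) =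
        t ^ 2 * (‖M * Mᴴ - Mᴴ * M‖ + charpolyGauge M) := by
    rw [RCLike.real_smul_eq_coe_smul (K := 𝕜), norm_commutator_conjTranspose_smul,
      charpolyGauge_smul, RCLike.norm_of_nonneg ht, mul_add]
  exact exists_norm_pow_equiv_of_homogeneous two_ne_zero hcont.continuousOn hsmul
    fun _ => commutator_add_charpolyGauge_pos

lemma frobNorm_eq_norm {m : ℕ} (M : Matrix (Fin m) (Fin m) ℂ) : frobNorm M = ‖M‖ := by
  simp [frobNorm, frobenius_norm_def, Real.sqrt_eq_rpow]

end FrobeniusNorm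

/-- There exists a constant `C ≥ 1`, depending only on `m`, such that
for every `m × m` complex matrix `M`,
`C⁻¹ (‖[M,M*]‖ + ∑_{k=1}^m |b_k(M)|^{2/k}) ≤ ‖M‖² ≤ C (‖[M,M*]‖ + ∑_{k=1}^m |b_k(M)|^{2/k})`,
where `b_k(M)` is the coefficient of `λ^{m-k}` in the characteristic polynomial of `M`. -/
theorem matrix_norm_equiv_commutator_charpoly (m : ℕ) :
    ∃ C : ℝ, 1 ≤ C ∧ ∀ M : Matrix (Fin m) (Fin m) ℂ,
      C⁻¹ * (frobNorm (M * Mᴴ - Mᴴ * M) +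
          ∑ k ∈ Finset.Icc 1 m,
            ‖(Matrix.charpoly M).coeff (m - k)‖ ^ ((2 : ℝ) / (k : ℝ))) ≤
        frobNorm M ^ 2 ∧
      frobNorm M ^ 2 ≤
        C * (frobNorm (M * Mᴴ - Mᴴ * M) +
          ∑ k ∈ Finset.Icc 1 m,
            ‖(Matrix.charpoly M).coeff (m - k)‖ ^ ((2 : ℝ) / (k : ℝ))) := by
  simpa only [frobNorm_eq_norm, Fintype.card_fin] using
    matrix_norm_equiv_commutator_charpoly_general ℂ (Fin m)
end

section
/- Two complex 2×2 matrices M and N have no common eigenvector if and only if det(M·N − N·M) ≠ 0. (Here a common eigenvector is a nonzero vector v ∈ ℂ² such that M·v = a·v and N·v = b·v for some scalars a, b ∈ ℂ.) -/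
/-!
Write `⁅f, g⁆ = f g - g f`; it kills every common eigenvector of `f` and `g`. Conversely, suppose
that `rank ⁅f, g⁆ ≤ 1`, let `μ` be an eigenvalue of `f` and put `a = f - μ`, so that
`⁅a, g⁆ = ⁅f, g⁆`. Either `g` preserves `ker a`, and an eigenvector of `g` in `ker a` is a common
eigenvector, or some `x ∈ ker a` has `a (g x) ≠ 0`. In the second case `⁅a, g⁆ x = a (g x)` spans
the range of the commutator, so `g` preserves `range a`, a proper nonzero subspace to which
induction on the dimension applies. For `2 × 2` matrices, rank at most one means vanishing
determinant.
-/

open Matrix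

open Module Module.End

theorem range_mem_invtSubmodule_of_ker_notMem {K V : Type*} [DivisionRing K]
    [AddCommGroup V] [Module K V] {a g : End K V}
    (h_rank : (a * g - g * a).rank ≤ 1) (h_ker : LinearMap.ker a ∉ g.invtSubmodule) :
    LinearMap.range a ∈ g.invtSubmodule := by
  obtain ⟨x, hax, hagx⟩ : ∃ x, a x = 0 ∧ a (g x) ≠ 0 := by
    simpa [mem_invtSubmodule_iff_forall_mem_of_mem] using h_ker
  obtain ⟨u, hu⟩ := (rank_submodule_le_one_iff' _).mp h_rank
  have exists_smul (y : V) : ∃ c : K, c • u = a (g y) - g (a y) :=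
    Submodule.mem_span_singleton.mp (hu (LinearMap.mem_range_self _ y))
  have u_mem : u ∈ LinearMap.range a := by
    obtain ⟨c, hc⟩ := exists_smul x
    rw [hax, map_zero, sub_zero] at hc
    have hc0 : c ≠ 0 := fun h0 ↦ hagx (by rw [← hc, h0, zero_smul])
    rw [← Submodule.smul_mem_iff _ hc0, hc]
    exact LinearMap.mem_range_self a (g x)
  rintro _ ⟨y, rfl⟩
  obtain ⟨c, hc⟩ := exists_smul y
  have hgay : g (a y) = a (g y) - c • u := by rw [hc, sub_sub_cancel]
  rw [Submodule.mem_comap, hgay]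
  exact sub_mem (LinearMap.mem_range_self a (g y)) (Submodule.smul_mem _ c u_mem)

section Restrict

variable {R V : Type*} [AddCommGroup V]

theorem rank_commutator_restrict_le [Ring R] [Module R V] {f g : End R V} {W : Submodule R V}
    (hf : ∀ x ∈ W, f x ∈ W) (hg : ∀ x ∈ W, g x ∈ W) :
    (f.restrict hf * g.restrict hg - g.restrict hg * f.restrict hf).rank ≤
      (f * g - g * f).rank := by
  set c : End R W := f.restrict hf * g.restrict hg - g.restrict hg * f.restrict hf
  have h_comp : W.subtype ∘ₗ c = (f * g - g * f) ∘ₗ W.subtype := rfl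
  calc c.rank = (W.subtype ∘ₗ c).rank := by
        rw [LinearMap.rank, LinearMap.rank, LinearMap.range_comp]
        exact (Submodule.equivMapOfInjective _ W.injective_subtype _).rank_eq
    _ ≤ (f * g - g * f).rank := h_comp ▸ LinearMap.rank_comp_le_left _ _

theorem hasEigenvector_restrict_iff [CommRing R] [Module R V] {f : End R V} {W : Submodule R V}
    (hf : ∀ x ∈ W, f x ∈ W) {μ : R} {w : W} :
    HasEigenvector (f.restrict hf) μ w ↔ f.HasEigenvector μ w := by
  simp only [hasEigenvector_iff, mem_eigenspace_iff, Subtype.ext_iff, ne_eq,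
    LinearMap.coe_restrict_apply, Submodule.coe_smul, Submodule.coe_zero]

end Restrict

section CommonEigenvector

variable {K V : Type*} [Field K] [IsAlgClosed K] [AddCommGroup V] [Module K V]

theorem exists_hasEigenvector_mem {g : End K V} {W : Submodule K V} [FiniteDimensional K W]
    (hW : W ≠ ⊥) (hg : W ∈ g.invtSubmodule) : ∃ v ∈ W, ∃ ν, g.HasEigenvector ν v := by
  have : Nontrivial W := Submodule.nontrivial_iff_ne_bot.mpr hW
  obtain ⟨ν, hν⟩ := exists_eigenvalue (g.restrict hg)
  obtain ⟨w, hw⟩ := hν.exists_hasEigenvector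
  exact ⟨w, w.2, ν, (hasEigenvector_restrict_iff hg).mp hw⟩

theorem exists_common_hasEigenvector_of_rank_commutator_le_one [FiniteDimensional K V]
    [Nontrivial V] {f g : End K V} (h : (f * g - g * f).rank ≤ 1) :
    ∃ v μ ν, f.HasEigenvector μ v ∧ g.HasEigenvector ν v := by
  induction hn : finrank K V using Nat.strong_induction_on generalizing V with
  | _ n ih =>
    obtain ⟨μ, hμ⟩ := exists_eigenvalue f
    set a : End K V := f - μ • 1 with ha
    have h_comm : a * g - g * a = f * g - g * f := by
      rw [ha, sub_mul, mul_sub, smul_one_mul, mul_smul_one, sub_sub_sub_cancel_right]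
    have h_ker : LinearMap.ker a ≠ ⊥ := fun h_bot ↦ hμ (eigenspace_def.trans h_bot)
    by_cases hg_ker : LinearMap.ker a ∈ g.invtSubmodule
    · obtain ⟨v, hv, ν, hgv⟩ := exists_hasEigenvector_mem h_ker hg_ker
      exact ⟨v, μ, ν, ⟨eigenspace_def.ge hv, hgv.2⟩, hgv⟩
    · have hg : LinearMap.range a ∈ g.invtSubmodule :=
        range_mem_invtSubmodule_of_ker_notMem (h_comm ▸ h) hg_ker
      have h_range : LinearMap.range a ≠ ⊥ := fun h_bot ↦ hg_ker <| by
        rw [LinearMap.ker_eq_top.mpr (LinearMap.range_eq_bot.mp h_bot)]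
        exact invtSubmodule.top_mem g
      have hf : ∀ x ∈ LinearMap.range a, f x ∈ LinearMap.range a := by
        rintro _ ⟨y, rfl⟩
        exact ⟨f y, by simp [ha]⟩
      have : Nontrivial (LinearMap.range a) := Submodule.nontrivial_iff_ne_bot.mpr h_range
      have h_lt : finrank K (LinearMap.range a) < n :=
        hn ▸ Submodule.finrank_lt (mt LinearMap.ker_eq_bot_iff_range_eq_top.mpr h_ker)
      obtain ⟨w, α, β, hfw, hgw⟩ :=
        ih _ h_lt ((rank_commutator_restrict_le hf hg).trans h) rfl
      exact ⟨w, α, β, (hasEigenvector_restrict_iff hf).mp hfw,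
        (hasEigenvector_restrict_iff hg).mp hgw⟩

end CommonEigenvector

theorem commutator_mulVec_eq_zero {n R : Type*} [Fintype n] [CommRing R] {M N : Matrix n n R}
    {v : n → R} {a b : R} (hM : M *ᵥ v = a • v) (hN : N *ᵥ v = b • v) :
    (M * N - N * M) *ᵥ v = 0 := by
  rw [sub_mulVec, ← mulVec_mulVec, ← mulVec_mulVec, hM, hN, mulVec_smul, mulVec_smul, hM, hN,
    smul_comm, sub_self]

theorem no_common_eigenvector_iff_det_commutator_ne_zero_general {K : Type*} [Field K]
    [IsAlgClosed K] (M N : Matrix (Fin 2) (Fin 2) K) :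
    (¬ ∃ v : Fin 2 → K, v ≠ 0 ∧ ∃ a b : K, M.mulVec v = a • v ∧ N.mulVec v = b • v) ↔
      (M * N - N * M).det ≠ 0 := by
  refine not_congr ⟨?_, fun h_det ↦ ?_⟩
  · rintro ⟨v, hv, a, b, hM, hN⟩
    exact exists_mulVec_eq_zero_iff.mp ⟨v, hv, commutator_mulVec_eq_zero hM hN⟩
  · set C : End K (Fin 2 → K) := toLin' M * toLin' N - toLin' N * toLin' M with hC
    have hC_det : LinearMap.det C = 0 := by
      rw [hC, mul_eq_comp, mul_eq_comp, ← toLin'_mul, ← toLin'_mul, ← map_sub,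
        LinearMap.det_toLin', h_det]
    have hC_rank : C.rank ≤ 1 := by
      rw [LinearMap.rank, ← finrank_eq_rank, Nat.cast_le_one, ← Nat.lt_succ_iff]
      simpa only [finrank_fin_fun] using
        Submodule.finrank_lt (LinearMap.range_lt_top_of_det_eq_zero hC_det).ne
    obtain ⟨v, a, b, hM, hN⟩ := exists_common_hasEigenvector_of_rank_commutator_le_one hC_rank
    exact ⟨v, hM.2, a, b, hM.apply_eq_smul, hN.apply_eq_smul⟩

/-- Two complex `2 × 2` matrices `M` and `N` have no common eigenvector if
and only if `det (M N − N M) ≠ 0`. A common eigenvector is a nonzero `v ∈ ℂ²` with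
`M v = a v` and `N v = b v` for some scalars `a, b ∈ ℂ`. -/
theorem no_common_eigenvector_iff_det_commutator_ne_zero
    (M N : Matrix (Fin 2) (Fin 2) ℂ) :
    (¬ ∃ v : Fin 2 → ℂ, v ≠ 0 ∧ ∃ a b : ℂ, M.mulVec v = a • v ∧ N.mulVec v = b • v) ↔
      (M * N - N * M).det ≠ 0 :=
  no_common_eigenvector_iff_det_commutator_ne_zero_general M N
end

section
/- Let p be an m×m complex matrix with p² = p, and let π be an m×m complex matrix with π² = π, π* = π, and whose range (column space) equals the range of p. Then ‖π‖² + ‖p − π‖² = ‖p‖² in the Frobenius norm, and moreover ‖π‖² equals the rank of p. -/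
open Matrix

/-!
If `p` fixes the range of the orthogonal projection `q`, then `p q = q`, and by taking adjoints
`q p* = q`. Hence `p - q` is orthogonal to `q` for the trace inner product `tr (A B*)`, which is
Pythagoras' theorem; and `‖q‖² = tr (q q*) = tr q` is the rank of `q`.
-/

theorem mul_star_self_add_sub_mul_star_sub {R : Type*} [NonUnitalRing R] [StarRing R] {p q : R}
    (hq : IsStarProjection q) (hpq : p * q = q) :
    q * star q + (p - q) * star (p - q) = p * star p := by
  have hqp : q * star p = q := by
    simpa only [star_mul, hq.isSelfAdjoint.star_eq] using congrArg star hpq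
  rw [star_sub, hq.isSelfAdjoint.star_eq, sub_mul, mul_sub, mul_sub, hpq, hqp, hq.isIdempotentElem]
  abel

section Idempotent

variable {n : Type*} [Fintype n]

theorem isIdempotentElem_mulVecLin {R : Type*} [CommSemiring R] {p : Matrix n n R}
    (hp : IsIdempotentElem p) : IsIdempotentElem p.mulVecLin := by
  rw [IsIdempotentElem, Module.End.mul_eq_comp, ← mulVecLin_mul, hp.eq]

theorem mul_eq_right_iff_range_mulVecLin_le {R l : Type*} [CommSemiring R] [Fintype l]
    {p : Matrix n n R} (hp : IsIdempotentElem p) (A : Matrix n l R) :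
    p * A = A ↔ LinearMap.range A.mulVecLin ≤ LinearMap.range p.mulVecLin := by
  rw [← LinearMap.IsIdempotentElem.comp_eq_right_iff (isIdempotentElem_mulVecLin hp),
    ← mulVecLin_mul, LinearMap.ext_iff, ext_iff_mulVec]
  rfl

theorem trace_eq_rank_of_isIdempotentElem {K : Type*} [Field K] {p : Matrix n n K}
    (hp : IsIdempotentElem p) : p.trace = p.rank := by
  classical
  rw [← trace_toLin'_eq, toLin'_apply']
  exact (LinearMap.IsIdempotentElem.isProj_range _ (isIdempotentElem_mulVecLin hp)).trace

end Idempotent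

section Frobenius

open scoped Matrix.Norms.Frobenius

variable {𝕜 n : Type*} [RCLike 𝕜] [Fintype n]

theorem ofReal_frobenius_norm_sq {l : Type*} [Fintype l] (A : Matrix l n 𝕜) :
    ((‖A‖ ^ 2 : ℝ) : 𝕜) = (A * Aᴴ).trace := by
  rw [frobenius_norm_def, ← Real.sqrt_eq_rpow, Real.sq_sqrt (by positivity)]
  simp [trace, mul_apply, RCLike.mul_conj]

theorem frobenius_norm_sq_add_norm_sub_sq {p q : Matrix n n 𝕜} (hq : IsStarProjection q)
    (hpq : p * q = q) : ‖q‖ ^ 2 + ‖p - q‖ ^ 2 = ‖p‖ ^ 2 := by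
  apply RCLike.ofReal_injective (K := 𝕜)
  rw [RCLike.ofReal_add]
  simp only [ofReal_frobenius_norm_sq, ← trace_add, ← star_eq_conjTranspose,
    mul_star_self_add_sub_mul_star_sub hq hpq]

theorem frobenius_norm_sq_eq_rank {q : Matrix n n 𝕜} (hq : IsStarProjection q) :
    ‖q‖ ^ 2 = q.rank := by
  apply RCLike.ofReal_injective (K := 𝕜)
  rw [ofReal_frobenius_norm_sq, ← star_eq_conjTranspose, hq.isSelfAdjoint.star_eq,
    hq.isIdempotentElem, trace_eq_rank_of_isIdempotentElem hq.isIdempotentElem,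
    RCLike.ofReal_natCast]

theorem frobNorm_sq_projection_pythagoras_general {p q : Matrix n n 𝕜}
    (hp : IsIdempotentElem p) (hq : IsStarProjection q)
    (hrange : LinearMap.range q.mulVecLin ≤ LinearMap.range p.mulVecLin) :
    ‖q‖ ^ 2 + ‖p - q‖ ^ 2 = ‖p‖ ^ 2 ∧ ‖q‖ ^ 2 = q.rank :=
  ⟨frobenius_norm_sq_add_norm_sub_sq hq ((mul_eq_right_iff_range_mulVecLin_le hp q).2 hrange),
    frobenius_norm_sq_eq_rank hq⟩

theorem frobNorm_eq_frobenius_norm {m : ℕ} (A : Matrix (Fin m) (Fin m) ℂ) : frobNorm A = ‖A‖ := by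
  simp only [frobNorm, frobenius_norm_def, Real.sqrt_eq_rpow, Real.rpow_two]

end Frobenius

/-- Let `p` be an idempotent `m × m` complex matrix and `q` the Hermitian
idempotent (orthogonal projection) with the same range. Then
`‖q‖² + ‖p − q‖² = ‖p‖²` in the Frobenius norm, and `‖q‖²` equals the rank of `p`. -/
theorem frobNorm_sq_projection_pythagoras (m : ℕ) (p q : Matrix (Fin m) (Fin m) ℂ)
    (hp : p * p = p) (hq : q * q = q) (hqs : qᴴ = q)
    (hrange : LinearMap.range q.mulVecLin = LinearMap.range p.mulVecLin) :
    frobNorm q ^ 2 + frobNorm (p - q) ^ 2 = frobNorm p ^ 2 ∧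
      frobNorm q ^ 2 = (p.rank : ℝ) := by
  have hrank : p.rank = q.rank := by rw [rank, rank, hrange]
  simp only [frobNorm_eq_frobenius_norm, hrank]
  exact frobNorm_sq_projection_pythagoras_general hp ⟨hq, hqs⟩ hrange.le
end
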